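/- Let (X,d) be an ultrametric space and for each p ∈ X write D_p(X) = {d(p,x) : x ∈ X}. If every open ball of (X,d) is a centered sphere in (X,d), then for every p ∈ X and every r ∈ (0,∞) the set D_p(X) ∩ [0,r) has a greatest element. Moreover, if (X,d) is a UT-space and for every p ∈ X and every r ∈ (0,∞) the set D_p(X) ∩ [0,r) has a greatest element, then every open ball of (X,d) is a centered sphere in (X,d). -/

import Mathlib

open scoped Classical ENNReal

universe u

/-- The ultrametric `d_l` generated by a labeling `l` on the vertex set of a tree `G`:
for `u ≠ v` it is the maximum of `l` over the vertices of the unique path joining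
`u` and `v`, and `d_l(u,u) = 0`. -/
noncomputable def dl {V : Type*} {G : SimpleGraph V} (hG : G.IsTree) (l : V → ℝ)
    (u v : V) : ℝ :=
  if u = v then 0
  else (((hG.existsUnique_path u v).exists.choose.support).map l).foldr max (l u)

/-- `(X,d)` is a **UT-space**: it is isometric to `(V(T), d_l)` for some labeled tree
`(T,l)` with a non-degenerate labeling `l : V(T) → [0,∞)`. -/
def IsUTSpace (X : Type u) [MetricSpace X] : Prop :=
  ∃ (V : Type u) (G : SimpleGraph V) (hG : G.IsTree) (l : V → ℝ),
    (∀ v, 0 ≤ l v) ∧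
    (∀ u v : V, G.Adj u v → 0 < max (l u) (l v)) ∧
    ∃ Φ : X → V, Function.Bijective Φ ∧ ∀ x y : X, dist x y = dl hG l (Φ x) (Φ y)

/-- The distance set `D(X) = {d(x,y) : x,y ∈ X}`, with distances recorded as
extended non-negative reals. -/
def distSet (X : Type*) [MetricSpace X] : Set ℝ≥0∞ :=
  {t | ∃ x y : X, edist x y = t}

/-- The center of distances `C(X) = {t ∈ D(X) : ∀ p ∈ X, ∃ x ∈ X, d(p,x) = t}`. -/
def centerOfDistances (X : Type*) [MetricSpace X] : Set ℝ≥0∞ :=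
  {t | t ∈ distSet X ∧ ∀ p : X, ∃ x : X, edist p x = t}

/-- A subset `S` of a metric space is a **centered sphere** if there are `c ∈ S` and
`r ∈ [0,∞)` with `S = {x : d(x,c) = r} ∪ {c}`. -/
def IsCenteredSphere {X : Type*} [MetricSpace X] (S : Set X) : Prop :=
  ∃ c ∈ S, ∃ r : ℝ, 0 ≤ r ∧ S = {x : X | dist x c = r} ∪ {c}

/-!
In an ultrametric space any two points of a centered sphere `{x | d(x,c) = s} ∪ {c}` are at distance
at most `s`, and every one of its points realizes `s` unless the sphere is a single point. So if a
ball around `p` is a centered sphere, then the distances from `p` have a maximum on it.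

Conversely, if this maximum exists and equals `d(p,x)`, then the ball is the closed ball of radius
`d(p,x)`. In a UT-space with `p ≠ x`, `d(p,x)` is the label of some vertex `w` on the path from `p`
to `x`. This vertex lies in the closed ball, hence is a center of it, and the distance from `w` to
any other point is at least the label of `w`, which is `d(p,x)`. The closed ball is therefore the
centered sphere of radius `d(p,x)` around `w`.
-/

open Set Metric

section TreeLabeling

theorem isGreatest_foldr_max {α : Type*} [LinearOrder α] (L : List α) (a : α) :
    IsGreatest (insert a {x | x ∈ L}) (L.foldr max a) := by
  induction L with
  | nil => simp
  | cons b L ih =>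
    have hset : insert a {x | x ∈ b :: L} = insert b (insert a {x | x ∈ L}) := by
      ext x
      simp [or_left_comm]
    rw [hset]
    exact ih.insert b

variable {V : Type*} {G : SimpleGraph V} (hG : G.IsTree) (l : V → ℝ) {u v w : V}

theorem isGreatest_dl {p : G.Walk u v} (hp : p.IsPath) (huv : u ≠ v) :
    IsGreatest (l '' {w | w ∈ p.support}) (dl hG l u v) := by
  have hchoose := (hG.existsUnique_path u v).unique
    (hG.existsUnique_path u v).exists.choose_spec hp
  have hset : insert (l u) {t | t ∈ p.support.map l} = l '' {w | w ∈ p.support} := by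
    have hstart : l u ∈ {t | t ∈ p.support.map l} := List.mem_map_of_mem p.start_mem_support
    rw [insert_eq_of_mem hstart]
    ext t
    simp
  rw [dl, if_neg huv, hchoose, ← hset]
  exact isGreatest_foldr_max _ _

theorem label_le_dl (huv : u ≠ v) : l u ≤ dl hG l u v := by
  obtain ⟨p, hp⟩ := (hG.existsUnique_path u v).exists
  exact (isGreatest_dl hG l hp huv).2 (mem_image_of_mem l p.start_mem_support)

theorem dl_le_dl_of_mem_support {p : G.Walk u v} (hp : p.IsPath) (hw : w ∈ p.support)
    (huw : u ≠ w) (huv : u ≠ v) : dl hG l u w ≤ dl hG l u v :=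
  (isGreatest_dl hG l (hp.takeUntil hw) huw).mono (isGreatest_dl hG l hp huv)
    (image_mono (p.support_takeUntil_subset_support hw))

end TreeLabeling

section FarthestPoint

variable {X : Type*} [PseudoMetricSpace X]

theorem exists_isGreatest_range_dist_inter_Ico_iff (p : X) (r : ℝ) :
    (∃ m, IsGreatest (range (dist p) ∩ Ico 0 r) m) ↔
      ∃ x ∈ ball p r, IsMaxOn (dist p) (ball p r) x := by
  constructor
  · rintro ⟨_, ⟨⟨x, rfl⟩, _, hxr⟩, hmax⟩
    exact ⟨x, mem_ball'.2 hxr, fun y hy => hmax ⟨mem_range_self y, dist_nonneg, mem_ball'.1 hy⟩⟩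
  · rintro ⟨x, hx, hmax⟩
    refine ⟨dist p x, ⟨mem_range_self x, dist_nonneg, mem_ball'.1 hx⟩, ?_⟩
    rintro _ ⟨⟨y, rfl⟩, _, hyr⟩
    exact hmax (mem_ball'.2 hyr)

theorem ball_eq_closedBall_of_isMaxOn {p x : X} {r : ℝ} (hx : x ∈ ball p r)
    (hmax : IsMaxOn (dist p) (ball p r) x) : ball p r = closedBall p (dist p x) := by
  ext y
  rw [mem_closedBall']
  exact ⟨fun hy => hmax hy, fun hy => mem_ball'.2 (hy.trans_lt (mem_ball'.1 hx))⟩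

end FarthestPoint

section CenteredSphere

variable {X : Type*} [MetricSpace X]

theorem IsCenteredSphere.exists_isMaxOn_dist [IsUltrametricDist X] {S : Set X} {p : X}
    (hS : IsCenteredSphere S) (hp : p ∈ S) : ∃ x ∈ S, IsMaxOn (dist p) S x := by
  obtain ⟨c, hc, s, hs, rfl⟩ := hS
  set S := {x : X | dist x c = s} ∪ {c}
  have dist_center_le {y : X} (hy : y ∈ S) : dist y c ≤ s := by
    rcases hy with hy | rfl
    · exact hy.le
    · rwa [dist_self]
  have isMaxOn_of_dist_eq {x : X} (hx : dist p x = s) : IsMaxOn (dist p) S x := by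
    intro y hy
    calc dist p y ≤ max (dist p c) (dist c y) := dist_triangle_max p c y
      _ ≤ s := max_le (dist_center_le hp) (dist_comm c y ▸ dist_center_le hy)
      _ = dist p x := hx.symm
  rcases hp with hpc | rfl
  · exact ⟨c, hc, isMaxOn_of_dist_eq hpc⟩
  · by_cases hne : ∃ x, dist x p = s
    · obtain ⟨x, hx⟩ := hne
      exact ⟨x, Or.inl hx, isMaxOn_of_dist_eq (dist_comm x p ▸ hx)⟩
    · refine ⟨p, hc, ?_⟩
      rintro y (hy | rfl)
      · exact absurd ⟨y, hy⟩ hne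
      · exact le_refl (dist y y)

theorem isCenteredSphere_closedBall {c : X} {r : ℝ} (hr : 0 ≤ r)
    (hsep : ∀ y, y ≠ c → r ≤ dist y c) : IsCenteredSphere (closedBall c r) := by
  refine ⟨c, mem_closedBall_self hr, r, hr, Subset.antisymm (fun y hy => ?_) ?_⟩
  · exact (eq_or_ne y c).elim Or.inr fun hyc => Or.inl (le_antisymm hy (hsep y hyc))
  · exact union_subset sphere_subset_closedBall (singleton_subset_iff.2 (mem_closedBall_self hr))

end CenteredSphere

namespace IsUTSpace

variable {X : Type u} [MetricSpace X]

theorem exists_mem_closedBall_forall_dist_le (hX : IsUTSpace X) (c x : X) :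
    ∃ w ∈ closedBall c (dist c x), ∀ y, y ≠ w → dist c x ≤ dist y w := by
  rcases eq_or_ne c x with rfl | hcx
  · exact ⟨c, mem_closedBall_self dist_nonneg, fun y _ => by simp⟩
  obtain ⟨V, G, hG, l, -, -, Φ, ⟨hinj, hsurj⟩, hdist⟩ := hX
  obtain ⟨p, hp⟩ := (hG.existsUnique_path (Φ c) (Φ x)).exists
  obtain ⟨v, hv, hlabel⟩ := (isGreatest_dl hG l hp (hinj.ne hcx)).1
  obtain ⟨w, rfl⟩ := hsurj v
  rw [← hdist] at hlabel
  refine ⟨w, ?_, fun y hyw => ?_⟩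
  · rcases eq_or_ne c w with rfl | hcw
    · exact mem_closedBall_self dist_nonneg
    · rw [mem_closedBall', hdist, hdist]
      exact dl_le_dl_of_mem_support hG l hp hv (hinj.ne hcw) (hinj.ne hcx)
  · rw [← hlabel, dist_comm, hdist]
    exact label_le_dl hG l (hinj.ne hyw.symm)

theorem isCenteredSphere_closedBall_dist [IsUltrametricDist X] (hX : IsUTSpace X) (c x : X) :
    IsCenteredSphere (closedBall c (dist c x)) := by
  obtain ⟨w, hw, hsep⟩ := hX.exists_mem_closedBall_forall_dist_le c x
  rw [IsUltrametricDist.closedBall_eq_of_mem hw]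
  exact isCenteredSphere_closedBall dist_nonneg hsep

end IsUTSpace

/-- Let `(X,d)` be an ultrametric space and, for `p ∈ X`, let
`D_p(X) = {d(p,x) : x ∈ X}`.  If every open ball of `(X,d)` is a centered sphere in
`(X,d)`, then for all `p ∈ X` and `r ∈ (0,∞)` the set `D_p(X) ∩ [0,r)` has a
greatest element.  Moreover, if `(X,d)` is a UT-space and for all `p ∈ X`,
`r ∈ (0,∞)` the set `D_p(X) ∩ [0,r)` has a greatest element, then every open ball of
`(X,d)` is a centered sphere in `(X,d)`. -/
theorem ball_centeredSphere_and_greatest_element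
    {X : Type u} [MetricSpace X] [IsUltrametricDist X] :
    ((∀ (c : X) (r : ℝ), 0 < r → IsCenteredSphere (Metric.ball c r)) →
      ∀ (p : X) (r : ℝ), 0 < r →
        ∃ m : ℝ, ((∃ x : X, dist p x = m) ∧ 0 ≤ m ∧ m < r) ∧
          ∀ t : ℝ, (∃ x : X, dist p x = t) → 0 ≤ t → t < r → t ≤ m) ∧
    (IsUTSpace X →
      (∀ (p : X) (r : ℝ), 0 < r →
        ∃ m : ℝ, ((∃ x : X, dist p x = m) ∧ 0 ≤ m ∧ m < r) ∧
          ∀ t : ℝ, (∃ x : X, dist p x = t) → 0 ≤ t → t < r → t ≤ m) →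
      ∀ (c : X) (r : ℝ), 0 < r → IsCenteredSphere (Metric.ball c r)) := by
  have greatest_iff := exists_isGreatest_range_dist_inter_Ico_iff (X := X)
  simp only [IsGreatest, mem_upperBounds, mem_inter_iff, mem_range, mem_Ico, and_imp]
    at greatest_iff
  simp only [greatest_iff]
  constructor
  · intro hball p r hr
    exact (hball p r hr).exists_isMaxOn_dist (mem_ball_self hr)
  · intro hX hmax c r hr
    obtain ⟨x, hx, hxmax⟩ := hmax c r hr
    rw [ball_eq_closedBall_of_isMaxOn hx hxmax]
    exact hX.isCenteredSphere_closedBall_dist c x
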